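/- Let (a_i) be a sequence of distinct points of ℂ whose closure Z = cl{a_i} is compact with Lebesgue measure zero, and let (b_i) be nonzero complex numbers with ∑|b_i| < ∞. If the function l(z) = ∑_i b_i/(z − a_i) vanishes identically on ℂ \ Z, then all b_i = 0 — contradiction; hence l is not identically zero on ℂ \ Z. -/

import Mathlib

open MeasureTheory

/-!
The sum is the Cauchy transform of the discrete measure `∑ b i δ_{a i}`, and it vanishes almost
everywhere because `Z` is null. To recover the mass `b 0`, put the origin at `a 0` and test against
`z` on the disc of radius `ε`. In polar coordinates the circle integrals of `1 / (z - w)` give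
`∫_{‖z‖ < ε} z / (z - w) = π (ε² - ‖w‖²)₊` (`integral_ball_div_sub`).
Since `1 / z` is locally integrable, these integrals converge absolutely, uniformly in `w`
(`exists_lintegral_ball_div_sub_le`), so the sum may be integrated termwise, which gives
`∑ b i (ε² - ‖a i - a 0‖²)₊ = 0` for all `ε > 0`. After division by `ε²`, every term with
`i ≠ 0` tends to `0` as `ε → 0` while the term `i = 0` is constantly `b 0`; dominated convergence
yields `b 0 = 0`, a contradiction.
-/

lemma lintegral_ball_inv_lt_top :
    ∫⁻ z in Metric.ball (0 : ℂ) 1, ‖z⁻¹‖ₑ < ⊤ := by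
  rw [← lintegral_indicator Metric.isOpen_ball.measurableSet, ← Complex.lintegral_comp_polarCoord_symm]
  -- The Jacobian `r` cancels `1 / r`.
  have hle : ∀ p ∈ polarCoord.target, ENNReal.ofReal p.1 •
      (Metric.ball (0 : ℂ) 1).indicator (fun z => ‖z⁻¹‖ₑ) (Complex.polarCoord.symm p) ≤
      (Set.Ioo (0 : ℝ) 1 ×ˢ Set.Ioo (-Real.pi) Real.pi).indicator (fun _ => (1 : ENNReal)) p := by
    intro p hp
    have hp1 : 0 < p.1 := hp.1
    have hn : ‖Complex.polarCoord.symm p‖ = p.1 := by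
      rw [Complex.norm_polarCoord_symm, abs_of_pos hp1]
    by_cases h : p.1 < 1
    · have h1 : Complex.polarCoord.symm p ∈ Metric.ball (0 : ℂ) 1 := by
        rw [mem_ball_zero_iff, hn]; exact h
      have h2 : p ∈ Set.Ioo (0 : ℝ) 1 ×ˢ Set.Ioo (-Real.pi) Real.pi := ⟨⟨hp1, h⟩, hp.2⟩
      rw [Set.indicator_of_mem h1, Set.indicator_of_mem h2, ← ofReal_norm, norm_inv, hn,
        smul_eq_mul, ← ENNReal.ofReal_mul hp1.le, mul_inv_cancel₀ hp1.ne', ENNReal.ofReal_one]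
    · have h1 : Complex.polarCoord.symm p ∉ Metric.ball (0 : ℂ) 1 := by
        rw [mem_ball_zero_iff, hn]; exact h
      rw [Set.indicator_of_notMem h1]
      simp
  refine (setLIntegral_mono' polarCoord.open_target.measurableSet hle).trans_lt ?_
  refine (setLIntegral_le_lintegral _ _).trans_lt ?_
  rw [lintegral_indicator (measurableSet_Ioo.prod measurableSet_Ioo), setLIntegral_one,
    Measure.volume_eq_prod, Measure.prod_prod, Real.volume_Ioo, Real.volume_Ioo]
  exact ENNReal.mul_lt_top ENNReal.ofReal_lt_top ENNReal.ofReal_lt_top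

lemma exists_lintegral_ball_div_sub_le (ε : ℝ) :
    ∃ C : ENNReal, C ≠ ⊤ ∧ ∀ w : ℂ, ∫⁻ z in Metric.ball (0 : ℂ) ε, ‖z / (z - w)‖ₑ ≤ C := by
  refine ⟨ENNReal.ofReal ε * (volume (Metric.ball (0 : ℂ) ε) +
    ∫⁻ z in Metric.ball (0 : ℂ) 1, ‖z⁻¹‖ₑ), ?_, fun w => ?_⟩
  · exact ENNReal.mul_ne_top ENNReal.ofReal_ne_top
      (ENNReal.add_ne_top.2 ⟨measure_ball_lt_top.ne, lintegral_ball_inv_lt_top.ne⟩)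
  -- Split according to whether `z` lies within distance `1` of the pole `w`.
  have hle : ∀ z ∈ Metric.ball (0 : ℂ) ε, ‖z / (z - w)‖ₑ ≤ ENNReal.ofReal ε *
      (1 + (Metric.ball (0 : ℂ) 1).indicator (fun z => ‖z⁻¹‖ₑ) (z - w)) := by
    intro z hz
    rw [div_eq_mul_inv, enorm_mul]
    have hz' : ‖z‖ < ε := mem_ball_zero_iff.1 hz
    gcongr
    · rw [← ofReal_norm]; exact ENNReal.ofReal_le_ofReal hz'.le
    · by_cases h : z - w ∈ Metric.ball (0 : ℂ) 1
      · rw [Set.indicator_of_mem h]; exact le_add_self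
      · rw [Set.indicator_of_notMem h, add_zero, ← ofReal_norm, ← ENNReal.ofReal_one, norm_inv]
        refine ENNReal.ofReal_le_ofReal (inv_le_one_of_one_le₀ ?_)
        rw [mem_ball_zero_iff] at h; linarith
  refine (setLIntegral_mono' Metric.isOpen_ball.measurableSet hle).trans ?_
  rw [lintegral_const_mul' _ _ ENNReal.ofReal_ne_top, lintegral_add_left measurable_const,
    setLIntegral_one]
  refine mul_le_mul_right (add_le_add_right ?_ _) _
  refine (setLIntegral_le_lintegral _ _).trans ?_
  rw [lintegral_sub_right_eq_self
    (fun z : ℂ => (Metric.ball (0 : ℂ) 1).indicator (fun z => ‖z⁻¹‖ₑ) z) w,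
    lintegral_indicator Metric.isOpen_ball.measurableSet]

/-- The winding number of a circle around a point off it, as an angular integral. -/
lemma integral_angle_div_sub (w : ℂ) {r : ℝ} (hr : 0 < r) (hrw : r ≠ ‖w‖) :
    ∫ θ in Set.Ioo (-Real.pi) Real.pi,
      Complex.polarCoord.symm (r, θ) / (Complex.polarCoord.symm (r, θ) - w) =
      if ‖w‖ < r then (2 * Real.pi : ℂ) else 0 := by
  have hc : ∀ θ : ℝ, Complex.polarCoord.symm (r, θ) = circleMap 0 r θ := by
    intro θ
    rw [Complex.polarCoord_symm_apply, circleMap, Complex.exp_mul_I]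
    simp
  simp_rw [hc]
  rw [← integral_Ioc_eq_integral_Ioo,
    ← intervalIntegral.integral_of_le (by linarith [Real.pi_pos])]
  have hper : Function.Periodic
      (fun θ : ℝ => circleMap 0 r θ / (circleMap 0 r θ - w)) (2 * Real.pi) := by
    intro θ
    simp only [periodic_circleMap 0 r θ]
  have h1 := hper.intervalIntegral_add_eq (-Real.pi) 0
  rw [show -Real.pi + 2 * Real.pi = Real.pi by ring, zero_add] at h1
  rw [h1]
  have h2 : (∮ z in C(0, r), (z - w)⁻¹) =
      Complex.I * ∫ θ in (0 : ℝ)..2 * Real.pi, circleMap 0 r θ / (circleMap 0 r θ - w) := by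
    rw [circleIntegral, ← intervalIntegral.integral_const_mul]
    congr 1; ext θ
    rw [deriv_circleMap, smul_eq_mul]; ring
  have h3 : (∮ z in C(0, r), (z - w)⁻¹) =
      Complex.I * if ‖w‖ < r then (2 * Real.pi : ℂ) else 0 := by
    split_ifs with h
    · rw [circleIntegral.integral_sub_inv_of_mem_ball (mem_ball_zero_iff.2 h)]; ring
    · have hlt : r < ‖w‖ := lt_of_le_of_ne (not_lt.1 h) hrw
      have hne : ∀ z ∈ Metric.closedBall (0 : ℂ) r, z - w ≠ 0 := by
        intro z hz h0
        rw [mem_closedBall_zero_iff, sub_eq_zero.1 h0] at hz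
        linarith
      rw [mul_zero]
      refine Complex.circleIntegral_eq_zero_of_differentiable_on_off_countable hr.le
        Set.countable_empty (ContinuousOn.inv₀ (by fun_prop) hne) fun z hz => ?_
      exact DifferentiableAt.inv (by fun_prop) (hne z (Metric.ball_subset_closedBall hz.1))
  exact mul_left_cancel₀ Complex.I_ne_zero (h2.symm.trans h3)

lemma integral_ball_div_sub (w : ℂ) (ε : ℝ) (hε : 0 < ε) :
    ∫ z in Metric.ball (0 : ℂ) ε, z / (z - w) =
      ((Real.pi * max (ε ^ 2 - ‖w‖ ^ 2) 0 : ℝ) : ℂ) := by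
  set F : ℂ → ℂ := (Metric.ball (0 : ℂ) ε).indicator fun z => z / (z - w) with hF
  have hFm : Measurable F :=
    (measurable_id.div (measurable_id.sub_const w)).indicator Metric.isOpen_ball.measurableSet
  have hFfin : ∫⁻ z, ‖F z‖ₑ < ⊤ := by
    obtain ⟨C, hC, hle⟩ := exists_lintegral_ball_div_sub_le ε
    simp_rw [hF, enorm_indicator_eq_indicator_enorm]
    rw [lintegral_indicator Metric.isOpen_ball.measurableSet]
    exact (hle w).trans_lt hC.lt_top
  rw [← integral_indicator Metric.isOpen_ball.measurableSet, ← hF,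
    ← Complex.integral_comp_polarCoord_symm]
  have hmeas : Measurable fun p : ℝ × ℝ => Complex.polarCoord.symm p := by
    simp_rw [Complex.polarCoord_symm_apply]; fun_prop
  have hint : IntegrableOn (fun p : ℝ × ℝ => p.1 • F (Complex.polarCoord.symm p))
      (Set.Ioi (0 : ℝ) ×ˢ Set.Ioo (-Real.pi) Real.pi) (volume.prod volume) := by
    refine ⟨(measurable_fst.smul (hFm.comp hmeas)).aestronglyMeasurable, ?_⟩
    rw [hasFiniteIntegral_iff_enorm]
    rw [← Complex.lintegral_comp_polarCoord_symm] at hFfin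
    refine lt_of_eq_of_lt ?_ hFfin
    refine setLIntegral_congr_fun polarCoord.open_target.measurableSet fun p hp => ?_
    have hp1 : 0 < p.1 := hp.1
    simp only [enorm_smul, smul_eq_mul]
    rw [Real.enorm_of_nonneg hp1.le]
  change ∫ p in Set.Ioi (0 : ℝ) ×ˢ Set.Ioo (-Real.pi) Real.pi,
    p.1 • F (Complex.polarCoord.symm p) ∂(volume.prod volume) = _
  rw [setIntegral_prod _ hint]
  have hinner : ∫ r in Set.Ioi (0 : ℝ), ∫ θ in Set.Ioo (-Real.pi) Real.pi,
      r • F (Complex.polarCoord.symm (r, θ)) = ∫ r in Set.Ioi (0 : ℝ),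
      (Set.Ioo ‖w‖ ε).indicator (fun r : ℝ => ((2 * Real.pi * r : ℝ) : ℂ)) r := by
    refine integral_congr_ae ?_
    -- The circle through the pole has radius `‖w‖`, a single value of `r`.
    have hne : ∀ᵐ r : ℝ ∂volume.restrict (Set.Ioi (0 : ℝ)), r ≠ ‖w‖ :=
      ae_restrict_of_ae (by simp [ae_iff])
    filter_upwards [hne, ae_restrict_mem measurableSet_Ioi] with r hrw hr
    have hr0 : 0 < r := hr
    rw [integral_smul]
    by_cases hrε : r < ε
    · have : ∀ θ : ℝ, F (Complex.polarCoord.symm (r, θ)) =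
          Complex.polarCoord.symm (r, θ) / (Complex.polarCoord.symm (r, θ) - w) := by
        intro θ
        refine Set.indicator_of_mem ?_ _
        rw [mem_ball_zero_iff, Complex.norm_polarCoord_symm, abs_of_pos hr0]; exact hrε
      simp_rw [this]
      rw [integral_angle_div_sub w hr0 hrw]
      split_ifs with h
      · rw [Set.indicator_of_mem (show r ∈ Set.Ioo ‖w‖ ε from ⟨h, hrε⟩), Complex.real_smul]
        push_cast; ring
      · rw [Set.indicator_of_notMem (fun h' => h h'.1), smul_zero]
    · have : ∀ θ : ℝ, F (Complex.polarCoord.symm (r, θ)) = 0 := by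
        intro θ
        refine Set.indicator_of_notMem ?_ _
        rw [mem_ball_zero_iff, Complex.norm_polarCoord_symm, abs_of_pos hr0]; exact hrε
      simp_rw [this]
      rw [Set.indicator_of_notMem (fun h' => hrε h'.2)]
      simp
  rw [hinner, setIntegral_indicator measurableSet_Ioo,
    Set.inter_eq_right.2 (show Set.Ioo ‖w‖ ε ⊆ Set.Ioi 0 from
      fun r hr => (norm_nonneg w).trans_lt hr.1), integral_complex_ofReal]
  congr 1
  rcases le_total ‖w‖ ε with h | h
  · rw [← integral_Ioc_eq_integral_Ioo, ← intervalIntegral.integral_of_le h,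
      intervalIntegral.integral_const_mul, integral_id, max_eq_left]
    · ring
    · nlinarith [norm_nonneg w]
  · rw [Set.Ioo_eq_empty (not_lt.2 h), max_eq_right]
    · simp
    · nlinarith [norm_nonneg w]

theorem rational_series_not_identically_zero (a : ℕ → ℂ) (ha : Function.Injective a)
    (Z : Set ℂ) (hZ : Z = closure (Set.range a)) (hZc : IsCompact Z)
    (hZm : volume Z = 0) (b : ℕ → ℂ) (hb : ∀ i, b i ≠ 0)
    (hsum : Summable fun i => ‖b i‖) :
    ¬ ∀ z ∈ Zᶜ, (∑' i : ℕ, b i / (z - a i)) = 0 := by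
  intro hzero
  have hae : ∀ᵐ z : ℂ, z + a 0 ∉ Z :=
    (measurePreserving_add_right volume (a 0)).quasiMeasurePreserving.ae
      (measure_eq_zero_iff_ae_notMem.1 hZm)
  have key : ∀ ε : ℝ, 0 < ε →
      ∑' i, b i * ((max (ε ^ 2 - ‖a i - a 0‖ ^ 2) 0 : ℝ) : ℂ) = 0 := by
    intro ε hε
    obtain ⟨C, hC, hle⟩ := exists_lintegral_ball_div_sub_le ε
    have hswap := integral_tsum (μ := volume.restrict (Metric.ball (0 : ℂ) ε))
      (f := fun i z => b i * (z / (z - (a i - a 0))))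
      (fun i => ((measurable_id.div (measurable_id.sub_const _)).const_mul _).aestronglyMeasurable)
      (by
        have hb' : ∑' i, ‖b i‖ₑ ≠ ⊤ := by
          simp_rw [← ofReal_norm]; exact hsum.tsum_ofReal_ne_top
        refine ne_top_of_le_ne_top (ENNReal.mul_ne_top hb' hC) ?_
        rw [← ENNReal.tsum_mul_right]
        refine ENNReal.tsum_le_tsum fun i => ?_
        simp_rw [enorm_mul]
        rw [lintegral_const_mul' _ _ enorm_ne_top]
        gcongr
        exact hle _)
    have hleft : ∫ z in Metric.ball (0 : ℂ) ε, ∑' i, b i * (z / (z - (a i - a 0))) = 0 := by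
      refine integral_eq_zero_of_ae (ae_restrict_of_ae ?_)
      filter_upwards [hae] with z hz
      have h := hzero (z + a 0) hz
      calc ∑' i, b i * (z / (z - (a i - a 0))) = ∑' i, z * (b i / (z + a 0 - a i)) := by
            congr 1; ext i
            rw [show z - (a i - a 0) = z + a 0 - a i by ring]; ring
        _ = 0 := by rw [tsum_mul_left, h, mul_zero]
    rw [hleft] at hswap
    simp_rw [integral_const_mul, integral_ball_div_sub _ ε hε] at hswap
    have h2 : (Real.pi : ℂ) * ∑' i, b i * ((max (ε ^ 2 - ‖a i - a 0‖ ^ 2) 0 : ℝ) : ℂ) = 0 := by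
      rw [← tsum_mul_left, hswap]
      congr 1; ext i
      push_cast; ring
    exact (mul_eq_zero.1 h2).resolve_left (by exact_mod_cast Real.pi_ne_zero)
  have hlim := tendsto_tsum_of_dominated_convergence (𝓕 := nhdsWithin (0 : ℝ) (Set.Ioi 0))
    (f := fun ε i => b i * ((max (ε ^ 2 - ‖a i - a 0‖ ^ 2) 0 / ε ^ 2 : ℝ) : ℂ))
    (g := fun i => if i = 0 then b 0 else 0) hsum
    (by
      intro i
      refine tendsto_const_nhds.congr' ?_
      by_cases hi : i = 0
      · subst hi
        filter_upwards [self_mem_nhdsWithin] with ε hε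
        have hε0 : 0 < ε := hε
        have : max (ε ^ 2 - ‖a 0 - a 0‖ ^ 2) 0 / ε ^ 2 = 1 := by
          have h0 : ε ^ 2 - ‖a 0 - a 0‖ ^ 2 = ε ^ 2 := by simp
          rw [h0, max_eq_left (by positivity), div_self (by positivity)]
        rw [this]
        simp
      · have hd : 0 < ‖a i - a 0‖ := norm_pos_iff.2 (sub_ne_zero.2 fun h => hi (ha h))
        filter_upwards [Ioo_mem_nhdsGT hd] with ε hε
        rw [max_eq_right (by nlinarith [hε.1, hε.2])]
        simp [hi])
    (by
      filter_upwards [self_mem_nhdsWithin] with ε hε i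
      have hε0 : 0 < ε := hε
      rw [norm_mul, Complex.norm_real, Real.norm_of_nonneg (by positivity)]
      refine mul_le_of_le_one_right (norm_nonneg _) ((div_le_one (by positivity)).2 ?_)
      exact max_le (by nlinarith [sq_nonneg ‖a i - a 0‖]) (by positivity))
  rw [tsum_ite_eq] at hlim
  refine hb 0 (tendsto_nhds_unique hlim (tendsto_const_nhds.congr' ?_))
  filter_upwards [self_mem_nhdsWithin] with ε hε
  have h := key ε hε
  simp_rw [Complex.ofReal_div, ← mul_div_assoc]
  rw [tsum_div_const, h, zero_div]
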